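/- Let p be an odd prime, let q ≥ 1 be an integer, let M ≥ 1 be an integer, and set θ = p^{−M} ∈ ℚ_p, so ‖θ‖_p > 1. Let f(x) = ((θx + q)/(x + θ + q − 1))², and let x₁ be a root in ℚ_p of x² + (2θ − θ² + 2q − 1)x + q² = 0 with ‖x₁‖_p = ‖θ‖_p². Then for every x ∈ ℚ_p with ‖x‖_p > 1 such that f^[n](x) ≠ 1 − θ − q for every n ≥ 0, the sequence of iterates f^[n](x) converges to x₁ as n → ∞ (in the topology of ℚ_p). -/

import Mathlib

theorem aux_dom {p : ℕ} [Fact p.Prime] (a b : ℚ_[p]) (h : ‖b‖ < ‖a‖) : ‖a + b‖ = ‖a‖ := by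
  rw [IsUltrametricDist.norm_add_eq_max_of_norm_ne_norm h.ne']
  exact max_eq_left h.le

theorem stmt_18 (p : ℕ) [Fact p.Prime] (hp2 : p ≠ 2)
    (q : ℕ) (hq : 1 ≤ q) (M : ℕ) (hM : 1 ≤ M)
    (θ : ℚ_[p]) (hθ : θ = ((p : ℚ_[p]) ^ M)⁻¹)
    (f : ℚ_[p] → ℚ_[p])
    (hf : f = fun x => ((θ * x + q) / (x + θ + q - 1)) ^ 2)
    (x₁ : ℚ_[p])
    (h₁ : x₁ ^ 2 + (2 * θ - θ ^ 2 + 2 * q - 1) * x₁ + q ^ 2 = 0)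
    (hn₁ : ‖x₁‖ = ‖θ‖ ^ 2)
    (x : ℚ_[p]) (hx : 1 < ‖x‖)
    (hpole : ∀ n : ℕ, f^[n] x ≠ 1 - θ - q) :
    Filter.Tendsto (fun n => f^[n] x) Filter.atTop (nhds x₁) := by
  have hT : 1 < ‖θ‖ := by
    have hp1 : (1 : ℝ) < p := by exact_mod_cast (Fact.out : p.Prime).one_lt
    rw [hθ, norm_inv, norm_pow, Padic.norm_p, inv_pow, inv_inv]
    exact one_lt_pow₀ hp1 (by omega)
  have hq1 : ‖(q : ℚ_[p])‖ ≤ 1 := by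
    simpa using Padic.norm_int_le_one (p := p) (q : ℤ)
  have hqm : ‖(q : ℚ_[p]) - 1‖ ≤ 1 := by
    simpa using Padic.norm_int_le_one (p := p) ((q : ℤ) - 1)
  clear hθ
  set T := ‖θ‖ with hTdef
  have hTT : T < T ^ 2 := by nlinarith
  have hnum : ∀ y : ℚ_[p], 1 < ‖y‖ → ‖θ * y + q‖ = T * ‖y‖ := by
    intro y hy
    rw [aux_dom, norm_mul]
    rw [norm_mul]
    nlinarith
  have hfn : ∀ y : ℚ_[p], 1 < ‖y‖ → ‖f y‖ = (T * ‖y‖ / ‖y + θ + q - 1‖) ^ 2 := by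
    intro y hy
    rw [hf]
    simp only [norm_pow, norm_div, hnum y hy]
  have hDbig : ∀ y : ℚ_[p], T < ‖y‖ → ‖y + θ + q - 1‖ = ‖y‖ := by
    intro y hy
    have e : y + θ + q - 1 = y + (θ + (q - 1)) := by ring
    have : ‖θ + ((q : ℚ_[p]) - 1)‖ = T := aux_dom _ _ (by linarith)
    rw [e, aux_dom _ _ (by rw [this]; exact hy)]
  have hDsmall : ∀ y : ℚ_[p], ‖y‖ < T → ‖y + θ + q - 1‖ = T := by
    intro y hy
    have e : y + θ + q - 1 = (θ + (q - 1)) + y := by ring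
    have : ‖θ + ((q : ℚ_[p]) - 1)‖ = T := aux_dom _ _ (by linarith)
    rw [e, aux_dom _ _ (by rw [this]; exact hy), this]
  have hDle : ∀ y : ℚ_[p], ‖y‖ = T → ‖y + θ + q - 1‖ ≤ T := by
    intro y hy
    have e : y + θ + q - 1 = y + (θ + (q - 1)) := by ring
    have h3 : ‖θ + ((q : ℚ_[p]) - 1)‖ = T := aux_dom _ _ (by linarith)
    rw [e]
    refine (Padic.nonarchimedean _ _).trans ?_
    rw [h3, hy, max_self]
  have hbig : ∀ y : ℚ_[p], T < ‖y‖ → ‖f y‖ = T ^ 2 := by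
    intro y hy
    rw [hfn y (by linarith), hDbig y hy]
    have : ‖y‖ ≠ 0 := by linarith
    field_simp
  have hsmall : ∀ y : ℚ_[p], 1 < ‖y‖ → ‖y‖ < T → ‖f y‖ = ‖y‖ ^ 2 := by
    intro y hy hy2
    rw [hfn y hy, hDsmall y hy2]
    have : T ≠ 0 := by linarith
    field_simp
  have hmid : ∀ y : ℚ_[p], ‖y‖ = T → y ≠ 1 - θ - q → T < ‖f y‖ := by
    intro y hy hne
    have hpos : 0 < ‖y + θ + q - 1‖ := by
      rw [norm_pos_iff]
      intro h
      apply hne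
      linear_combination h
    rw [hfn y (by linarith), hy]
    have : T ≤ T * T / ‖y + θ + q - 1‖ := by
      rw [le_div_iff₀ hpos]
      exact mul_le_mul_of_nonneg_left (hDle y hy) (by linarith)
    nlinarith
  have hex : ∃ n, T ≤ ‖f^[n] x‖ := by
    by_contra! hcon
    have : ∀ n, ‖x‖ ^ (n + 1) ≤ ‖f^[n] x‖ := by
      intro n
      induction n with
      | zero => simp
      | succ k ih =>
        have h0 : ‖x‖ ≤ ‖x‖ ^ (k + 1) := le_self_pow₀ hx.le (by omega)
        rw [Function.iterate_succ_apply', hsmall _ (by linarith) (hcon k), pow_succ]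
        nlinarith
    obtain ⟨n, hn⟩ := pow_unbounded_of_one_lt T hx
    have h0 : ‖x‖ ^ n ≤ ‖x‖ ^ (n + 1) := pow_le_pow_right₀ hx.le (by omega)
    linarith [this n, hcon n]
  have hex2 : ∃ n, ‖f^[n] x‖ = T ^ 2 := by
    obtain ⟨n, hn⟩ := hex
    rcases hn.lt_or_eq with h | h
    · exact ⟨n + 1, by rw [Function.iterate_succ_apply', hbig _ h]⟩
    · refine ⟨n + 2, ?_⟩
      rw [Function.iterate_succ_apply', Function.iterate_succ_apply']
      exact hbig _ (hmid _ h.symm (hpole n))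
  have hDne : ∀ y : ℚ_[p], ‖y‖ = T ^ 2 → y + θ + q - 1 ≠ 0 := by
    intro y hy
    rw [← norm_pos_iff, hDbig y (by linarith)]
    linarith
  have hfix : f x₁ = x₁ := by
    have := hDne x₁ hn₁
    rw [hf]
    simp only
    rw [div_pow, div_eq_iff (pow_ne_zero 2 this)]
    linear_combination (1 - x₁) * h₁
  have hc : ‖(q : ℚ_[p]) - θ * (θ + q - 1)‖ = T ^ 2 := by
    have h3 : ‖θ + ((q : ℚ_[p]) - 1)‖ = T := aux_dom _ _ (by linarith)
    have h4 : ‖-(θ * (θ + ((q : ℚ_[p]) - 1)))‖ = T ^ 2 := by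
      rw [norm_neg, norm_mul, h3]; ring
    have e : (q : ℚ_[p]) - θ * (θ + q - 1) = -(θ * (θ + ((q : ℚ_[p]) - 1))) + q := by ring
    rw [e, aux_dom _ _ (by rw [h4]; linarith), h4]
  have hcontr : ∀ y : ℚ_[p], ‖y‖ = T ^ 2 → ‖f y - x₁‖ ≤ T⁻¹ * ‖y - x₁‖ := by
    intro y hy
    have d1 := hDne x₁ hn₁
    have d2 := hDne y hy
    have n1 := hDbig x₁ (by linarith)
    have n2 := hDbig y (by linarith)
    have hT0 : T ≠ 0 := by linarith
    have e : f y - x₁ = ((q - θ * (θ + q - 1)) * (x₁ - y) / ((y + θ + q - 1) * (x₁ + θ + q - 1)))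
        * ((θ * y + q) / (y + θ + q - 1) + (θ * x₁ + q) / (x₁ + θ + q - 1)) := by
      conv_lhs => rw [← hfix]
      rw [hf]
      field_simp
      ring
    have b : ‖(θ * y + q) / (y + θ + q - 1) + (θ * x₁ + q) / (x₁ + θ + q - 1)‖ ≤ T := by
      refine (Padic.nonarchimedean _ _).trans ?_
      rw [norm_div, norm_div, hnum y (by linarith), hnum x₁ (by linarith), n1, n2, hy, hn₁]
      apply le_of_eq
      rw [max_self]
      field_simp
    rw [e, norm_mul, norm_div, norm_mul, norm_mul, hc, n1, n2, hy, hn₁, norm_sub_rev x₁ y]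
    calc _ ≤ T ^ 2 * ‖y - x₁‖ / (T ^ 2 * T ^ 2) * T :=
          mul_le_mul_of_nonneg_left b (by positivity)
      _ = _ := by field_simp
  obtain ⟨N, hN⟩ := hex2
  have hall : ∀ k, ‖f^[k + N] x‖ = T ^ 2 := by
    intro k
    induction k with
    | zero => simpa using hN
    | succ k ih =>
      rw [show k + 1 + N = (k + N) + 1 by ring, Function.iterate_succ_apply']
      exact hbig _ (by linarith)
  have hbd : ∀ k, ‖f^[k + N] x - x₁‖ ≤ (T⁻¹) ^ k * ‖f^[N] x - x₁‖ := by
    intro k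
    induction k with
    | zero => simp
    | succ k ih =>
      rw [show k + 1 + N = (k + N) + 1 by ring, Function.iterate_succ_apply']
      refine (hcontr _ (hall k)).trans ?_
      rw [pow_succ', mul_assoc]
      exact mul_le_mul_of_nonneg_left ih (by positivity)
  rw [← Filter.tendsto_add_atTop_iff_nat N, tendsto_iff_norm_sub_tendsto_zero]
  refine squeeze_zero (fun _ => norm_nonneg _) hbd ?_
  have := (tendsto_pow_atTop_nhds_zero_of_lt_one (r := T⁻¹) (by positivity)
    (inv_lt_one_of_one_lt₀ hT)).mul_const ‖f^[N] x - x₁‖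
  simpa using this
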